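/- For H proper, radially 1-homogeneous and lsc, the function co*H defined pointwise by taking the lsc convex envelope of the radial section r ↦ H([x₁,r₁],[x₂,r₂]) (for each fixed (x₁,x₂)) coincides with the global lsc-then-convex envelope cl co H on the product cone, and both equal sup{φ₁(x₁)r₁ + φ₂(x₂)r₂ : (φ₁,φ₂) ∈ Φ_H}; moreover U_H = U_{cl co H} and cl co F_H = cl co F_{cl co H}. -/

import Mathlib

open MeasureTheory Topology Filter Set
open scoped NNReal ENNReal BoundedContinuousFunction

noncomputable section

namespace UOT

variable (X : Type*)

/-- The equivalence relation on `X × ℝ≥0` identifying all points with radius `0`. -/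
def coneSetoid : Setoid (X × ℝ≥0) where
  r p q := p = q ∨ (p.2 = 0 ∧ q.2 = 0)
  iseqv := by
    refine ⟨fun p => Or.inl rfl, ?_, ?_⟩
    · rintro p q (rfl | h)
      · exact Or.inl rfl
      · exact Or.inr ⟨h.2, h.1⟩
    · rintro p q r hpq hqr
      rcases hpq with rfl | h
      · exact hqr
      · rcases hqr with rfl | h'
        · exact Or.inr h
        · exact Or.inr ⟨h.1, h'.2⟩

/-- The geometric cone over `X`. -/
def Cone := Quotient (coneSetoid X)

/-- The canonical map sending `(x, r)` to the point `[x, r]` of the cone. -/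
def Cone.mk (x : X) (r : ℝ≥0) : Cone X := Quotient.mk (coneSetoid X) (x, r)

/-- The vertex `o` of the cone. -/
def Cone.vertex [Nonempty X] : Cone X := Cone.mk X (Classical.arbitrary X) 0

/-- The radial coordinate `r` of a point of the cone. -/
def Cone.radius : Cone X → ℝ≥0 :=
  Quotient.lift (fun p => p.2) (by
    rintro p q (rfl | ⟨h1, h2⟩)
    · rfl
    · simp [h1, h2])

/-- The base point `x` of a point of the cone (an arbitrary point of `X` at the vertex). -/
def Cone.basePt [Nonempty X] : Cone X → X :=
  Quotient.lift (fun p => if p.2 = 0 then Classical.arbitrary X else p.1) (by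
    rintro p q (rfl | ⟨h1, h2⟩)
    · rfl
    · simp [h1, h2])

/-- Radial rescaling `λ • [x, r] = [x, λ * r]` on the cone. -/
def Cone.smul (c : ℝ≥0) : Cone X → Cone X :=
  Quotient.lift (fun p => Cone.mk X p.1 (c * p.2)) (by
    rintro p q (rfl | ⟨h1, h2⟩)
    · rfl
    · apply Quotient.sound
      exact Or.inr ⟨by simp [h1], by simp [h2]⟩)

variable [TopologicalSpace X]

/-- The cone topology: a set is open iff its preimage in `X × ℝ≥0` is open and, when it
contains the vertex, it contains a whole strip `{[x, r] : r < ε}`. -/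
instance : TopologicalSpace (Cone X) where
  IsOpen U := IsOpen ((fun p : X × ℝ≥0 => Cone.mk X p.1 p.2) ⁻¹' U) ∧
      ∀ x : X, Cone.mk X x 0 ∈ U →
        ∃ ε : ℝ≥0, 0 < ε ∧ ∀ (y : X) (r : ℝ≥0), r < ε → Cone.mk X y r ∈ U
  isOpen_univ := ⟨isOpen_univ, fun _ _ => ⟨1, one_pos, fun _ _ _ => mem_univ _⟩⟩
  isOpen_inter := by
    rintro s t ⟨hs1, hs2⟩ ⟨ht1, ht2⟩
    refine ⟨hs1.inter ht1, fun x hx => ?_⟩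
    obtain ⟨ε₁, hε₁, h₁⟩ := hs2 x hx.1
    obtain ⟨ε₂, hε₂, h₂⟩ := ht2 x hx.2
    exact ⟨min ε₁ ε₂, lt_min hε₁ hε₂, fun y r hr =>
      ⟨h₁ y r (hr.trans_le (min_le_left _ _)), h₂ y r (hr.trans_le (min_le_right _ _))⟩⟩
  isOpen_sUnion := by
    intro S hS
    constructor
    · rw [Set.preimage_sUnion]
      exact isOpen_biUnion fun t ht => (hS t ht).1
    · intro x hx
      obtain ⟨t, ht, hxt⟩ := hx
      obtain ⟨ε, hε, h⟩ := (hS t ht).2 x hxt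
      exact ⟨ε, hε, fun y r hr => ⟨t, ht, h y r hr⟩⟩

instance : MeasurableSpace (Cone X) := borel (Cone X)

instance : BorelSpace (Cone X) := ⟨rfl⟩

/-- On a product of cones we use the Borel σ-algebra of the product topology. -/
instance (priority := 2000) prodConeMeasurableSpace (X₁ X₂ : Type*) [TopologicalSpace X₁]
    [TopologicalSpace X₂] : MeasurableSpace (Cone X₁ × Cone X₂) :=
  borel (Cone X₁ × Cone X₂)

instance (priority := 2000) prodConeBorelSpace (X₁ X₂ : Type*) [TopologicalSpace X₁]
    [TopologicalSpace X₂] : BorelSpace (Cone X₁ × Cone X₂) := ⟨rfl⟩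

variable {X}

/-- The scaled Dirac measure `r • δ_x` as a finite measure. -/
def diracFM {Y : Type*} [MeasurableSpace Y] (x : Y) : FiniteMeasure Y :=
  ⟨Measure.dirac x, inferInstance⟩

/-- The canonical map `[x, r] ↦ r • δ_x` from the cone to finite measures. -/
def coneToFM (X : Type*) [TopologicalSpace X] [MeasurableSpace X] :
    Cone X → FiniteMeasure X :=
  Quotient.lift (fun p : X × ℝ≥0 => p.2 • diracFM p.1) (by
    rintro p q (rfl | ⟨h1, h2⟩)
    · rfl
    · simp [h1, h2])

/-- A finite measure is discrete if it is a finite nonnegative combination of Dirac masses. -/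
def IsDiscreteFM {Y : Type*} [MeasurableSpace Y] (μ : FiniteMeasure Y) : Prop :=
  ∃ (n : ℕ) (c : Fin n → ℝ≥0) (x : Fin n → Y), μ = ∑ i, c i • diracFM (x i)

section Product

variable {X₁ X₂ : Type*} [TopologicalSpace X₁] [TopologicalSpace X₂]

/-- Radial `1`-homogeneity of a cost function on the product cone. -/
def RadiallyHomogeneous (H : Cone X₁ × Cone X₂ → ℝ≥0∞) : Prop :=
  ∀ (x₁ : X₁) (x₂ : X₂) (r₁ r₂ lam : ℝ≥0), 0 < lam →
    H (Cone.mk X₁ x₁ (lam * r₁), Cone.mk X₂ x₂ (lam * r₂)) =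
      (lam : ℝ≥0∞) * H (Cone.mk X₁ x₁ r₁, Cone.mk X₂ x₂ r₂)

/-- Radial convexity of a cost function on the product cone: every radial section is convex. -/
def RadiallyConvex (H : Cone X₁ × Cone X₂ → ℝ≥0∞) : Prop :=
  ∀ (x₁ : X₁) (x₂ : X₂) (a₁ a₂ b₁ b₂ t : ℝ≥0), t ≤ 1 →
    H (Cone.mk X₁ x₁ (t * a₁ + (1 - t) * b₁), Cone.mk X₂ x₂ (t * a₂ + (1 - t) * b₂)) ≤
      (t : ℝ≥0∞) * H (Cone.mk X₁ x₁ a₁, Cone.mk X₂ x₂ a₂) +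
        ((1 - t : ℝ≥0) : ℝ≥0∞) * H (Cone.mk X₁ x₁ b₁, Cone.mk X₂ x₂ b₂)

/-- Properness: `H` is not identically `+∞`. -/
def ProperCost (H : Cone X₁ × Cone X₂ → ℝ≥0∞) : Prop := ∃ y, H y ≠ ⊤

variable [MeasurableSpace X₁] [MeasurableSpace X₂]

/-- First `p`-homogeneous marginal `h₁^p(α) = (x₁)_♯ (r₁^p · α)`. -/
def homMarginalFst [Nonempty X₁] (p : ℝ) (α : Measure (Cone X₁ × Cone X₂)) : Measure X₁ :=
  Measure.map (fun y : Cone X₁ × Cone X₂ => Cone.basePt X₁ y.1)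
    (α.withDensity fun y => (Cone.radius X₁ y.1 : ℝ≥0∞) ^ p)

/-- Second `p`-homogeneous marginal `h₂^p(α) = (x₂)_♯ (r₂^p · α)`. -/
def homMarginalSnd [Nonempty X₂] (p : ℝ) (α : Measure (Cone X₁ × Cone X₂)) : Measure X₂ :=
  Measure.map (fun y : Cone X₁ × Cone X₂ => Cone.basePt X₂ y.2)
    (α.withDensity fun y => (Cone.radius X₂ y.2 : ℝ≥0∞) ^ p)

variable [Nonempty X₁] [Nonempty X₂]

/-- `α ∈ H^p(μ₁, μ₂)`: a (finite Radon) homogeneous coupling with finite `p`-th radial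
moments and `p`-homogeneous marginals `μ₁, μ₂`. -/
def IsHomCoupling (p : ℝ) (α : Measure (Cone X₁ × Cone X₂))
    (μ₁ : Measure X₁) (μ₂ : Measure X₂) : Prop :=
  IsFiniteMeasure α ∧
    (∫⁻ y, ((Cone.radius X₁ y.1 : ℝ≥0∞) ^ p + (Cone.radius X₂ y.2 : ℝ≥0∞) ^ p) ∂α) ≠ ⊤ ∧
    homMarginalFst p α = μ₁ ∧ homMarginalSnd p α = μ₂

/-- The unbalanced optimal transport cost `U_H`. -/
def UH (H : Cone X₁ × Cone X₂ → ℝ≥0∞) (μ₁ : Measure X₁) (μ₂ : Measure X₂) : ℝ≥0∞ :=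
  ⨅ (α : Measure (Cone X₁ × Cone X₂)) (_ : IsHomCoupling 1 α μ₁ μ₂), ∫⁻ y, H y ∂α

/-- The truncated product cone `C_R[X₁, X₂]`: both radii at most `R`. -/
def prodConeTrunc (R : ℝ≥0) : Set (Cone X₁ × Cone X₂) :=
  {y | Cone.radius X₁ y.1 ≤ R ∧ Cone.radius X₂ y.2 ≤ R}

/-- Membership of a pair of bounded continuous potentials in the dual constraint set `Φ_H`. -/
def InPhi (H : Cone X₁ × Cone X₂ → ℝ≥0∞) (φ₁ : X₁ →ᵇ ℝ) (φ₂ : X₂ →ᵇ ℝ) : Prop :=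
  ∀ (x₁ : X₁) (x₂ : X₂) (r₁ r₂ : ℝ≥0),
    ENNReal.ofReal (φ₁ x₁ * r₁ + φ₂ x₂ * r₂) ≤ H (Cone.mk X₁ x₁ r₁, Cone.mk X₂ x₂ r₂)

/-- `H`-cyclical monotonicity of a subset of the product cone. -/
def HCyclicallyMonotone (H : Cone X₁ × Cone X₂ → ℝ≥0∞)
    (Γ : Set (Cone X₁ × Cone X₂)) : Prop :=
  ∀ (N : ℕ) (y : Fin N → Cone X₁ × Cone X₂), (∀ i, y i ∈ Γ) → ∀ σ : Equiv.Perm (Fin N),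
    ∑ i, H (y i) ≤ ∑ i, H ((y i).1, (y (σ i)).2)

/-- A radial convex cone in the product cone. -/
def IsRadialConvexCone (Γ : Set (Cone X₁ × Cone X₂)) : Prop :=
  ∀ (x₁ : X₁) (x₂ : X₂) (a₁ a₂ b₁ b₂ lam mu : ℝ≥0),
    (Cone.mk X₁ x₁ a₁, Cone.mk X₂ x₂ a₂) ∈ Γ → (Cone.mk X₁ x₁ b₁, Cone.mk X₂ x₂ b₂) ∈ Γ →
      (Cone.mk X₁ x₁ (lam * a₁ + mu * b₁), Cone.mk X₂ x₂ (lam * a₂ + mu * b₂)) ∈ Γ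

end Product

/-- Convexity (with scalars in `ℝ≥0`) of an `ℝ≥0∞`-valued function on a module. -/
def ConvexENN {E : Type*} [AddCommMonoid E] [SMul ℝ≥0 E] (f : E → ℝ≥0∞) : Prop :=
  ∀ (a b : E) (t : ℝ≥0), t ≤ 1 →
    f (t • a + (1 - t) • b) ≤ (t : ℝ≥0∞) * f a + ((1 - t : ℝ≥0) : ℝ≥0∞) * f b

/-- The lower semicontinuous convex envelope: the largest lsc convex function below `F`. -/
def lscConvexHull {E : Type*} [TopologicalSpace E] [AddCommMonoid E] [SMul ℝ≥0 E]
    (F : E → ℝ≥0∞) : E → ℝ≥0∞ :=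
  fun e => ⨆ (g : E → ℝ≥0∞) (_ : LowerSemicontinuous g ∧ ConvexENN g ∧ g ≤ F), g e

/-- The convex envelope: the largest convex function below `F`. -/
def convexHullFn {E : Type*} [AddCommMonoid E] [SMul ℝ≥0 E] (F : E → ℝ≥0∞) : E → ℝ≥0∞ :=
  fun e => ⨆ (g : E → ℝ≥0∞) (_ : ConvexENN g ∧ g ≤ F), g e

/-- The lower semicontinuous envelope: the largest lsc function below `F`. -/
def lscHull {E : Type*} [TopologicalSpace E] (F : E → ℝ≥0∞) : E → ℝ≥0∞ :=
  fun e => ⨆ (g : E → ℝ≥0∞) (_ : LowerSemicontinuous g ∧ g ≤ F), g e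

end UOT
namespace UOT

variable {X₁ X₂ : Type*} [TopologicalSpace X₁] [TopologicalSpace X₂]

/-- The radial section of `H` at fixed base points `(x₁, x₂)`. -/
def secF (H : Cone X₁ × Cone X₂ → ℝ≥0∞) (x₁ : X₁) (x₂ : X₂) : ℝ≥0 × ℝ≥0 → ℝ≥0∞ :=
  fun r => H (Cone.mk X₁ x₁ r.1, Cone.mk X₂ x₂ r.2)

/-- The radial convexification `co H` of `H`: the convex envelope of each radial section. -/
def radialConvexification [Nonempty X₁] [Nonempty X₂]
    (H : Cone X₁ × Cone X₂ → ℝ≥0∞) : Cone X₁ × Cone X₂ → ℝ≥0∞ :=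
  fun y => convexHullFn (secF H (Cone.basePt X₁ y.1) (Cone.basePt X₂ y.2))
    (Cone.radius X₁ y.1, Cone.radius X₂ y.2)

/-- The singular cost `F_H` on pairs of weighted Dirac masses. -/
def singCost [MeasurableSpace X₁] [MeasurableSpace X₂]
    (H : Cone X₁ × Cone X₂ → ℝ≥0∞) :
    FiniteMeasure X₁ × FiniteMeasure X₂ → ℝ≥0∞ :=
  fun q => ⨅ (y : Cone X₁ × Cone X₂)
    (_ : coneToFM X₁ y.1 = q.1 ∧ coneToFM X₂ y.2 = q.2), H y

/-! ### Positively homogeneous functions on the quadrant -/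

section Quadrant

variable {h k : ℝ≥0 × ℝ≥0 → ℝ≥0∞}

lemma add_of_parallel (hom : ∀ (c : ℝ≥0) v, h (c • v) = c * h v) (a b : ℝ≥0 × ℝ≥0)
    (hab : a.1 * b.2 = a.2 * b.1) : h (a + b) = h a + h b := by
  have h0 : h 0 = 0 := by simpa using hom 0 0
  by_cases ha : a = 0
  · simp [ha, h0]
  obtain ⟨s, rfl⟩ : ∃ s : ℝ≥0, b = s • a := by
    by_cases h1 : a.1 = 0
    · have h2 : a.2 ≠ 0 := fun h2 => ha (Prod.ext h1 h2)
      refine ⟨b.2 / a.2, Prod.ext ?_ ?_⟩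
      · have : a.2 * b.1 = 0 := by rw [← hab, h1, zero_mul]
        simpa [h1, h2] using this
      · simp [h2]
    · refine ⟨b.1 / a.1, Prod.ext ?_ ?_⟩
      · simp [h1]
      · simp only [Prod.smul_snd, smul_eq_mul]
        field_simp
        rw [mul_comm, hab, mul_comm]
  rw [hom, show a + s • a = (1 + s) • a by rw [add_smul, one_smul], hom]
  push_cast
  ring

lemma exists_pair_of_eq_smul_add_smul (hom : ∀ (c : ℝ≥0) v, h (c • v) = c * h v)
    {a b c : ℝ≥0 × ℝ≥0} {s t : ℝ≥0} (hs : 0 < s) (ht : 0 < t) (hb : b = s • a + t • c) :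
    ∃ d e, d + e = a + b + c ∧ h d + h e ≤ h a + h b + h c := by
  rcases le_total (s * h a + t * h c) (h b) with hle | hle
  · refine ⟨(1 + s) • a, (1 + t) • c, ?_, ?_⟩
    · rw [hb]; module
    · rw [hom, hom]
      push_cast
      calc (1 + (s : ℝ≥0∞)) * h a + (1 + t) * h c
          = h a + (s * h a + t * h c) + h c := by ring
        _ ≤ _ := by gcongr
  · have key : ∀ {a c : ℝ≥0 × ℝ≥0} {s t : ℝ≥0}, 0 < s → t ≤ s → b = s • a + t • c →
        h b ≤ s * h a + t * h c →
        ∃ d e, d + e = a + b + c ∧ h d + h e ≤ h a + h b + h c := by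
      intro a c s t hs hts hb hle
      obtain ⟨w, hw⟩ := exists_add_of_le (div_le_one_of_le₀ hts hs.le)
      have hss : (s⁻¹ * s : ℝ≥0) = 1 := inv_mul_cancel₀ hs.ne'
      have hsb : s⁻¹ • b = a + (t / s) • c := by
        rw [hb, smul_add, smul_smul, smul_smul, hss, one_smul, div_eq_inv_mul]
      refine ⟨(1 + s⁻¹) • b, w • c, ?_, ?_⟩
      · calc (1 + s⁻¹) • b + w • c = b + s⁻¹ • b + w • c := by rw [add_smul, one_smul]
          _ = a + b + (t / s + w) • c := by rw [hsb]; module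
          _ = a + b + c := by rw [← hw, one_smul]
      · have h1 : h (s⁻¹ • b) ≤ h a + ((t / s : ℝ≥0) : ℝ≥0∞) * h c := by
          rw [hom]
          calc ((s⁻¹ : ℝ≥0) : ℝ≥0∞) * h b ≤ ((s⁻¹ : ℝ≥0) : ℝ≥0∞) * (s * h a + t * h c) := by gcongr
            _ = ((s⁻¹ * s : ℝ≥0) : ℝ≥0∞) * h a + ((t / s : ℝ≥0) : ℝ≥0∞) * h c := by
              rw [div_eq_inv_mul]; push_cast; ring
            _ = _ := by rw [hss]; simp
        rw [hom] at h1
        rw [hom, hom]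
        calc ((1 + s⁻¹ : ℝ≥0) : ℝ≥0∞) * h b + w * h c
            = ((s⁻¹ : ℝ≥0) : ℝ≥0∞) * h b + h b + w * h c := by push_cast; ring
          _ ≤ (h a + ((t / s : ℝ≥0) : ℝ≥0∞) * h c) + h b + w * h c := by gcongr
          _ = h a + h b + ((t / s + w : ℝ≥0) : ℝ≥0∞) * h c := by push_cast; ring
          _ = _ := by rw [← hw]; simp
    rcases le_total t s with hts | hts
    · exact key hs hts hb hle
    · obtain ⟨d, e, h1, h2⟩ := key ht hts (by rw [hb, add_comm]) (by rwa [add_comm])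
      exact ⟨d, e, by rw [h1]; abel, h2.trans_eq (by ring)⟩

lemma exists_pair_of_real_relation (hom : ∀ (c : ℝ≥0) v, h (c • v) = c * h v)
    {a b c : ℝ≥0 × ℝ≥0} {x y z : ℝ} (hxz : 0 < x * z) (hxy : x * y < 0)
    (h1 : x * a.1 + y * b.1 + z * c.1 = 0) (h2 : x * a.2 + y * b.2 + z * c.2 = 0) :
    ∃ d e, d + e = a + b + c ∧ h d + h e ≤ h a + h b + h c := by
  have hy : y ≠ 0 := by rintro rfl; simp at hxy
  have hx : x ≠ 0 := by rintro rfl; simp at hxy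
  have hs : 0 < -x / y := by
    have : -x / y = -(x * y) / (y * y) := by field_simp
    rw [this]
    exact div_pos (by linarith) (mul_self_pos.2 hy)
  have ht : 0 < -z / y := by
    have : -z / y = (x * z) * (-(x * y)) / ((x * y) * (x * y)) := by field_simp
    rw [this]
    exact div_pos (mul_pos hxz (by linarith)) (mul_self_pos.2 (by simp [hx, hy]))
  refine exists_pair_of_eq_smul_add_smul hom (s := ⟨_, hs.le⟩) (t := ⟨_, ht.le⟩) hs ht
    (Prod.ext ?_ ?_) <;> ext
  · change (b.1 : ℝ) = -x / y * a.1 + -z / y * c.1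
    field_simp
    linarith
  · change (b.2 : ℝ) = -x / y * a.2 + -z / y * c.2
    field_simp
    linarith

/-- A sum of three vectors can be regrouped as a sum of two without increasing the cost. -/
lemma exists_pair_of_triple (hom : ∀ (c : ℝ≥0) v, h (c • v) = c * h v) (a b c : ℝ≥0 × ℝ≥0) :
    ∃ d e, d + e = a + b + c ∧ h d + h e ≤ h a + h b + h c := by
  by_cases hab : a.1 * b.2 = a.2 * b.1
  · exact ⟨a + b, c, rfl, by rw [add_of_parallel hom a b hab]⟩
  by_cases hbc : b.1 * c.2 = b.2 * c.1
  · exact ⟨a, b + c, by abel, by rw [add_of_parallel hom b c hbc, add_assoc]⟩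
  by_cases hca : c.1 * a.2 = c.2 * a.1
  · exact ⟨c + a, b, by abel, by rw [add_of_parallel hom c a hca]; apply le_of_eq; ring⟩
  obtain ⟨x, hx⟩ : ∃ x : ℝ, x = b.1 * c.2 - b.2 * c.1 := ⟨_, rfl⟩
  obtain ⟨y, hy⟩ : ∃ y : ℝ, y = c.1 * a.2 - c.2 * a.1 := ⟨_, rfl⟩
  obtain ⟨z, hz⟩ : ∃ z : ℝ, z = a.1 * b.2 - a.2 * b.1 := ⟨_, rfl⟩
  have h1 : x * a.1 + y * b.1 + z * c.1 = 0 := by rw [hx, hy, hz]; ring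
  have h2 : x * a.2 + y * b.2 + z * c.2 = 0 := by rw [hx, hy, hz]; ring
  have hx0 : x ≠ 0 := by
    rw [hx, sub_ne_zero]; exact_mod_cast hbc
  have hy0 : y ≠ 0 := by
    rw [hy, sub_ne_zero]; exact_mod_cast hca
  have hz0 : z ≠ 0 := by
    rw [hz, sub_ne_zero]; exact_mod_cast hab
  rcases (mul_ne_zero hx0 hz0).lt_or_gt with hxz | hxz <;>
    rcases (mul_ne_zero hx0 hy0).lt_or_gt with hxy | hxy
  · have hyz : 0 < y * z := by
      by_contra! hyz
      nlinarith [mul_pos_of_neg_of_neg hxz hxy, mul_self_pos.2 hx0]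
    obtain ⟨d, e, h3, h4⟩ := exists_pair_of_real_relation hom (a := b) (b := a) (c := c)
      (x := y) (y := x) hyz (by linarith) (by linarith) (by linarith)
    exact ⟨d, e, by rw [h3]; abel, h4.trans_eq (by ring)⟩
  · obtain ⟨d, e, h3, h4⟩ := exists_pair_of_real_relation hom (a := a) (b := c) (c := b)
      hxy hxz (by linarith) (by linarith)
    exact ⟨d, e, by rw [h3]; abel, h4.trans_eq (by ring)⟩
  · exact exists_pair_of_real_relation hom hxz hxy h1 h2
  · have key : ∀ u v w : ℝ≥0, x * u + y * v + z * w = 0 → u = 0 := by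
      intro u v w huvw
      have h3 := mul_nonneg hxy.le v.coe_nonneg
      have h4 := mul_nonneg hxz.le w.coe_nonneg
      have h5 : x * x * u + x * y * v + x * z * w = 0 := by linear_combination x * huvw
      have h6 : (u : ℝ) ≤ 0 := by
        by_contra! hu
        have := mul_pos (mul_self_pos.2 hx0) hu
        linarith
      exact_mod_cast le_antisymm h6 u.coe_nonneg
    refine absurd ?_ hab
    rw [key _ _ _ h1, key _ _ _ h2, zero_mul, zero_mul]

/-- `k` is the two-term infimal convolution of `h` with itself. -/
structure IsSplitting (h k : ℝ≥0 × ℝ≥0 → ℝ≥0∞) : Prop where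
  le_add : ∀ a b, k (a + b) ≤ h a + h b
  exists_add_le : ∀ r, ∃ a b, a + b = r ∧ h a + h b ≤ k r

namespace IsSplitting

lemma subadditive (hk : IsSplitting h k) (hom : ∀ (c : ℝ≥0) v, h (c • v) = c * h v)
    (r s : ℝ≥0 × ℝ≥0) : k (r + s) ≤ k r + k s := by
  obtain ⟨a, b, rfl, hab⟩ := hk.exists_add_le r
  obtain ⟨c, d, rfl, hcd⟩ := hk.exists_add_le s
  obtain ⟨u, v, huv, huv'⟩ := exists_pair_of_triple hom a b c
  obtain ⟨p, q, hpq, hpq'⟩ := exists_pair_of_triple hom u v d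
  calc k (a + b + (c + d)) = k (p + q) := by rw [hpq, huv, add_assoc (a + b)]
    _ ≤ h p + h q := hk.le_add p q
    _ ≤ h u + h v + h d := hpq'
    _ ≤ h a + h b + h c + h d := by gcongr
    _ = (h a + h b) + (h c + h d) := by ring
    _ ≤ _ := add_le_add hab hcd

lemma smul_le (hk : IsSplitting h k) (hom : ∀ (c : ℝ≥0) v, h (c • v) = c * h v)
    (c : ℝ≥0) (r : ℝ≥0 × ℝ≥0) : k (c • r) ≤ c * k r := by
  obtain ⟨a, b, rfl, hab⟩ := hk.exists_add_le r
  calc k (c • (a + b)) ≤ h (c • a) + h (c • b) := by rw [smul_add]; exact hk.le_add _ _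
    _ = c * (h a + h b) := by rw [hom, hom, mul_add]
    _ ≤ _ := by gcongr

lemma convexENN (hk : IsSplitting h k) (hom : ∀ (c : ℝ≥0) v, h (c • v) = c * h v) :
    ConvexENN k := fun _ _ _ _ =>
  (hk.subadditive hom _ _).trans (add_le_add (hk.smul_le hom _ _) (hk.smul_le hom _ _))

lemma le (hk : IsSplitting h k) (hom : ∀ (c : ℝ≥0) v, h (c • v) = c * h v) : k ≤ h := by
  intro r
  have h0 : h 0 = 0 := by simpa using hom 0 0
  simpa [h0] using hk.le_add r 0

end IsSplitting

lemma ConvexENN.apply_add_le {E : Type*} [AddCommMonoid E] [Module ℝ≥0 E] {f : E → ℝ≥0∞}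
    (hf : ConvexENN f) (a b : E) :
    f (a + b) ≤ ((2⁻¹ : ℝ≥0) : ℝ≥0∞) * f ((2 : ℝ≥0) • a) +
      ((2⁻¹ : ℝ≥0) : ℝ≥0∞) * f ((2 : ℝ≥0) • b) := by
  have h2 : (1 - 2⁻¹ : ℝ≥0) = 2⁻¹ := tsub_eq_of_eq_add (by norm_num)
  have h3 : (2⁻¹ * 2 : ℝ≥0) = 1 := by norm_num
  have := hf ((2 : ℝ≥0) • a) ((2 : ℝ≥0) • b) 2⁻¹ (by norm_num)
  rwa [h2, smul_smul, smul_smul, h3, one_smul, one_smul] at this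

lemma inv_two_mul_two_mul (x : ℝ≥0∞) :
    ((2⁻¹ : ℝ≥0) : ℝ≥0∞) * (((2 : ℝ≥0) : ℝ≥0∞) * x) = x := by
  rw [← mul_assoc, ← ENNReal.coe_mul, inv_mul_cancel₀ (by norm_num), ENNReal.coe_one, one_mul]

lemma IsSplitting.convexHullFn_eq (hk : IsSplitting h k)
    (hom : ∀ (c : ℝ≥0) v, h (c • v) = c * h v) : convexHullFn h = k := by
  refine le_antisymm (fun r => iSup₂_le ?_) fun r => ?_
  · rintro g ⟨hg, hgh⟩
    obtain ⟨a, b, rfl, hab⟩ := hk.exists_add_le r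
    refine (hg.apply_add_le a b).trans (le_trans ?_ hab)
    refine add_le_add ?_ ?_
    · grw [hgh _, hom, inv_two_mul_two_mul]
    · grw [hgh _, hom, inv_two_mul_two_mul]
  · exact le_iSup₂_of_le k ⟨hk.convexENN hom, hk.le hom⟩ le_rfl

lemma IsSplitting.lscConvexHull_eq (hk : IsSplitting h k)
    (hom : ∀ (c : ℝ≥0) v, h (c • v) = c * h v) (hlsc : LowerSemicontinuous k) :
    lscConvexHull h = k := by
  refine le_antisymm (fun r => ?_) fun r => ?_
  · rw [← hk.convexHullFn_eq hom]
    exact iSup₂_le fun g hg => le_iSup₂_of_le g hg.2 le_rfl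
  · exact le_iSup₂_of_le k ⟨hlsc, hk.convexENN hom, hk.le hom⟩ le_rfl

/-- Below any value of a lower semicontinuous sublinear function on the quadrant there is a
linear minorant. -/
lemma exists_linear_le (hsub : ∀ r s, k (r + s) ≤ k r + k s)
    (hsmul : ∀ (c : ℝ≥0) r, k (c • r) ≤ c * k r) (hlsc : LowerSemicontinuous k)
    (r : ℝ≥0 × ℝ≥0) {τ : ℝ≥0} (hτ : τ < k r) :
    ∃ p q : ℝ, (∀ s : ℝ≥0 × ℝ≥0, ENNReal.ofReal (p * s.1 + q * s.2) ≤ k s) ∧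
      (τ : ℝ) < p * r.1 + q * r.2 := by
  have hk0 : k 0 = 0 := le_antisymm (by simpa using hsmul 0 0) zero_le
  let E : Set ((ℝ × ℝ) × ℝ) := {z | ((0 ≤ z.1.1 ∧ 0 ≤ z.1.2) ∧ 0 ≤ z.2) ∧
    k (z.1.1.toNNReal, z.1.2.toNNReal) ≤ (z.2.toNNReal : ℝ≥0∞)}
  have hmem : ∀ z, z ∈ E ↔ ∃ (s : ℝ≥0 × ℝ≥0) (t : ℝ≥0),
      z = ((((s.1 : ℝ), (s.2 : ℝ))), (t : ℝ)) ∧ k s ≤ t := by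
    rintro ⟨⟨x, y⟩, t⟩
    constructor
    · rintro ⟨⟨⟨hx, hy⟩, ht⟩, hk⟩
      lift x to ℝ≥0 using hx
      lift y to ℝ≥0 using hy
      lift t to ℝ≥0 using ht
      exact ⟨(x, y), t, rfl, by simpa using hk⟩
    · rintro ⟨s, t, h1, h2⟩
      obtain ⟨⟨rfl, rfl⟩, rfl⟩ := by simpa using h1
      exact ⟨by simp, by simpa using h2⟩
  have hEclosed : IsClosed E := by
    refine IsClosed.inter ?_ ?_
    · exact ((isClosed_le continuous_const (continuous_fst.comp continuous_fst)).inter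
        (isClosed_le continuous_const (continuous_snd.comp continuous_fst))).inter
        (isClosed_le continuous_const continuous_snd)
    · exact hlsc.isClosed_epigraph.preimage
        (f := fun z : (ℝ × ℝ) × ℝ =>
          ((z.1.1.toNNReal, z.1.2.toNNReal), (z.2.toNNReal : ℝ≥0∞)))
        (Continuous.prodMk (by fun_prop) (ENNReal.continuous_coe.comp (by fun_prop)))
  have hEsmul : ∀ z ∈ E, ∀ c : ℝ≥0, (c : ℝ) • z ∈ E := by
    intro z hz c
    obtain ⟨s, t, rfl, hst⟩ := (hmem z).1 hz
    refine (hmem _).2 ⟨c • s, c * t, by simp, ?_⟩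
    calc k (c • s) ≤ c * k s := hsmul c s
      _ ≤ c * t := by gcongr
      _ = _ := by simp
  have hEadd : ∀ z ∈ E, ∀ w ∈ E, z + w ∈ E := by
    intro z hz w hw
    obtain ⟨s, t, rfl, hst⟩ := (hmem z).1 hz
    obtain ⟨s', t', rfl, hst'⟩ := (hmem w).1 hw
    refine (hmem _).2 ⟨s + s', t + t', by simp, ?_⟩
    push_cast
    exact (hsub s s').trans (add_le_add hst hst')
  have hEconvex : Convex ℝ E := by
    intro z hz w hw a b ha hb _
    exact hEadd _ (hEsmul z hz ⟨a, ha⟩) _ (hEsmul w hw ⟨b, hb⟩)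
  have hnot : (((r.1 : ℝ), (r.2 : ℝ)), (τ : ℝ)) ∉ E := by
    rintro ⟨-, h⟩
    simp only [Real.toNNReal_coe] at h
    exact absurd h (not_le.2 hτ)
  obtain ⟨f, u, hfr, hfE⟩ := geometric_hahn_banach_point_closed hEconvex hEclosed hnot
  obtain ⟨p, hp⟩ : ∃ p, p = -f ((1, 0), 0) := ⟨_, rfl⟩
  obtain ⟨q, hq⟩ : ∃ q, q = -f ((0, 1), 0) := ⟨_, rfl⟩
  obtain ⟨c, hc⟩ : ∃ c, c = f ((0, 0), 1) := ⟨_, rfl⟩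
  have hf : ∀ x y t : ℝ, f ((x, y), t) = -(p * x + q * y) + c * t := by
    intro x y t
    have : (((x, y), t) : (ℝ × ℝ) × ℝ) =
        x • ((1, 0), 0) + y • ((0, 1), 0) + t • ((0, 0), 1) := by simp
    rw [this, map_add, map_add, map_smul, map_smul, map_smul, hp, hq, hc]
    simp only [smul_eq_mul]
    ring
  have hu : u < 0 := by
    have := hfE 0 ((hmem 0).2 ⟨0, 0, rfl, by simp [hk0]⟩)
    simpa using this
  have hnonneg : ∀ z ∈ E, 0 ≤ f z := by
    intro z hz
    by_contra! hneg
    have h1 := hfE _ (hEsmul z hz ⟨u / f z, (div_pos_of_neg_of_neg hu hneg).le⟩)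
    rw [map_smul] at h1
    change u < u / f z * f z at h1
    rw [div_mul_cancel₀ _ hneg.ne] at h1
    exact lt_irrefl _ h1
  have hineq : ∀ (s : ℝ≥0 × ℝ≥0) (t : ℝ≥0), k s ≤ t → p * s.1 + q * s.2 ≤ c * t := by
    intro s t hst
    have := hnonneg _ ((hmem _).2 ⟨s, t, rfl, hst⟩)
    rw [hf] at this
    linarith
  have hc0 : 0 ≤ c := by
    have := hineq 0 1 (by simp [hk0])
    simpa using this
  rw [hf] at hfr
  have key : ∀ lam : ℝ, 0 ≤ lam → lam * c ≤ 1 → ∀ s : ℝ≥0 × ℝ≥0,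
      ENNReal.ofReal (lam * p * s.1 + lam * q * s.2) ≤ k s := by
    intro lam hlam hlc s
    rcases eq_or_ne (k s) ⊤ with htop | htop
    · simp [htop]
    · lift k s to ℝ≥0 using htop with t ht
      have := hineq s t ht.ge
      rw [ENNReal.ofReal_le_iff_le_toReal (by simp), ENNReal.coe_toReal]
      have h1 := mul_le_mul_of_nonneg_left this hlam
      have h2 := mul_le_mul_of_nonneg_right hlc t.coe_nonneg
      linarith
  rcases hc0.eq_or_lt with hc0 | hc0
  · have hpos : 0 < p * r.1 + q * r.2 := by rw [← hc0] at hfr; linarith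
    have hd : (0 : ℝ) ≤ (τ + 1) / (p * r.1 + q * r.2) := by positivity
    refine ⟨_, _, key ((τ + 1) / (p * r.1 + q * r.2)) hd (by rw [← hc0]; simp), ?_⟩
    rw [mul_assoc, mul_assoc, ← mul_add, div_mul_cancel₀ _ hpos.ne']
    linarith
  · refine ⟨_, _, key c⁻¹ (by positivity) (inv_mul_cancel₀ hc0.ne').le, ?_⟩
    rw [mul_assoc, mul_assoc, ← mul_add, ← div_eq_inv_mul, lt_div_iff₀ hc0]
    linarith

end Quadrant

/-! ### Topology of the cone -/

section ConeTopology

variable {X : Type*}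

lemma Cone.mk_zero_eq (x y : X) : Cone.mk X x 0 = Cone.mk X y 0 :=
  Quotient.sound (Or.inr ⟨rfl, rfl⟩)

lemma Cone.mk_surjective (y : Cone X) : ∃ x r, Cone.mk X x r = y := by
  induction y using Quotient.inductionOn with
  | h p => exact ⟨p.1, p.2, rfl⟩

@[simp]
lemma Cone.radius_mk (x : X) (r : ℝ≥0) : Cone.radius X (Cone.mk X x r) = r := rfl

@[simp]
lemma Cone.smul_mk (c : ℝ≥0) (x : X) (r : ℝ≥0) :
    Cone.smul X c (Cone.mk X x r) = Cone.mk X x (c * r) := rfl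

lemma Cone.basePt_mk [Nonempty X] (x : X) {r : ℝ≥0} (hr : r ≠ 0) :
    Cone.basePt X (Cone.mk X x r) = x := if_neg hr

lemma Cone.mk_basePt_radius [Nonempty X] (y : Cone X) :
    Cone.mk X (Cone.basePt X y) (Cone.radius X y) = y := by
  obtain ⟨x, r, rfl⟩ := Cone.mk_surjective y
  rcases eq_or_ne r 0 with rfl | hr
  · exact Cone.mk_zero_eq _ _
  · rw [Cone.basePt_mk x hr, Cone.radius_mk]

lemma Cone.mk_eq_mk_iff {x y : X} {r s : ℝ≥0} :
    Cone.mk X x r = Cone.mk X y s ↔ (x, r) = (y, s) ∨ (r = 0 ∧ s = 0) :=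
  ⟨fun h => Quotient.exact h, fun h => Quotient.sound h⟩

@[simp]
lemma Cone.radius_smul (c : ℝ≥0) (y : Cone X) :
    Cone.radius X (Cone.smul X c y) = c * Cone.radius X y := by
  obtain ⟨x, r, rfl⟩ := Cone.mk_surjective y
  rfl

lemma Cone.basePt_smul [Nonempty X] {c : ℝ≥0} {y : Cone X} (h : c * Cone.radius X y ≠ 0) :
    Cone.basePt X (Cone.smul X c y) = Cone.basePt X y := by
  obtain ⟨x, r, rfl⟩ := Cone.mk_surjective y
  rw [Cone.radius_mk] at h
  rw [Cone.smul_mk, Cone.basePt_mk x h, Cone.basePt_mk x (right_ne_zero_of_mul h)]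

variable [TopologicalSpace X]

lemma Cone.isOpen_iff {U : Set (Cone X)} : IsOpen U ↔
    IsOpen ((fun p : X × ℝ≥0 => Cone.mk X p.1 p.2) ⁻¹' U) ∧
      ∀ x : X, Cone.mk X x 0 ∈ U →
        ∃ ε : ℝ≥0, 0 < ε ∧ ∀ (y : X) (r : ℝ≥0), r < ε → Cone.mk X y r ∈ U := Iff.rfl

lemma Cone.continuous_mk : Continuous fun p : X × ℝ≥0 => Cone.mk X p.1 p.2 :=
  ⟨fun _ hU => (Cone.isOpen_iff.1 hU).1⟩

lemma Cone.isOpen_image_mk {W : Set (X × ℝ≥0)} (hW : IsOpen W) (h0 : ∀ p ∈ W, p.2 ≠ 0) :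
    IsOpen ((fun p : X × ℝ≥0 => Cone.mk X p.1 p.2) '' W) := by
  refine Cone.isOpen_iff.2 ⟨?_, ?_⟩
  · convert hW
    ext p
    constructor
    · rintro ⟨q, hq, hqp⟩
      rcases Cone.mk_eq_mk_iff.1 hqp with h | h
      · rwa [← show q = p from h]
      · exact absurd h.1 (h0 q hq)
    · exact fun hp => ⟨p, hp, rfl⟩
  · rintro x ⟨q, hq, hqp⟩
    rcases Cone.mk_eq_mk_iff.1 hqp with h | h
    · exact absurd (congrArg Prod.snd h) (h0 q hq)
    · exact absurd h.1 (h0 q hq)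

lemma Cone.nhds_mk (x : X) {r : ℝ≥0} (hr : r ≠ 0) :
    𝓝 (Cone.mk X x r) = map (fun p : X × ℝ≥0 => Cone.mk X p.1 p.2) (𝓝 (x, r)) := by
  refine le_antisymm (fun s hs => ?_) (Cone.continuous_mk.continuousAt (x := (x, r)))
  have hopen : IsOpen {p : X × ℝ≥0 | p.2 ≠ 0} := isOpen_ne.preimage continuous_snd
  obtain ⟨W, hWs, hW, hxW⟩ := mem_nhds_iff.1 (inter_mem (mem_map.1 hs) (hopen.mem_nhds hr))
  refine mem_nhds_iff.2 ⟨_, ?_, Cone.isOpen_image_mk hW fun p hp => (hWs hp).2, _, hxW, rfl⟩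
  rintro _ ⟨p, hp, rfl⟩
  exact (hWs hp).1

lemma Cone.exists_strip {x : X} {U : Set (Cone X)} (hU : U ∈ 𝓝 (Cone.mk X x 0)) :
    ∃ ε : ℝ≥0, 0 < ε ∧ ∀ (y : X) (r : ℝ≥0), r < ε → Cone.mk X y r ∈ U := by
  obtain ⟨V, hVU, hV, hxV⟩ := mem_nhds_iff.1 hU
  obtain ⟨ε, hε, h⟩ := (Cone.isOpen_iff.1 hV).2 x hxV
  exact ⟨ε, hε, fun y r hr => hVU (h y r hr)⟩

lemma Cone.continuous_radius : Continuous (Cone.radius X) := by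
  refine ⟨fun U hU => Cone.isOpen_iff.2 ⟨hU.preimage continuous_snd, fun x hx => ?_⟩⟩
  have h0 : (0 : ℝ≥0) ∈ U := hx
  obtain ⟨ε, hε, h⟩ := exists_Ico_subset_of_mem_nhds (hU.mem_nhds h0) ⟨1, one_pos⟩
  exact ⟨ε, hε, fun y r hr => h ⟨zero_le, hr⟩⟩

lemma Cone.continuous_smul :
    Continuous fun q : unitInterval × Cone X => Cone.smul X (unitInterval.toNNReal q.1) q.2 := by
  rw [continuous_iff_continuousAt]
  rintro ⟨θ, y⟩
  obtain ⟨x, r, rfl⟩ := Cone.mk_surjective y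
  rcases eq_or_ne r 0 with rfl | hr
  · intro U hU
    simp only [Cone.smul_mk, mul_zero] at hU
    obtain ⟨ε, hε, h⟩ := Cone.exists_strip hU
    have hopen : IsOpen {q : unitInterval × Cone X | Cone.radius X q.2 < ε} :=
      isOpen_lt (Cone.continuous_radius.comp continuous_snd) continuous_const
    have hmem : (θ, Cone.mk X x 0) ∈ {q : unitInterval × Cone X | Cone.radius X q.2 < ε} := hε
    rw [mem_map]
    filter_upwards [hopen.mem_nhds hmem]
    rintro ⟨θ', y'⟩ (hy' : Cone.radius X y' < ε)
    obtain ⟨x', r', rfl⟩ := Cone.mk_surjective y'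
    refine h _ _ (lt_of_le_of_lt ?_ hy')
    exact mul_le_of_le_one_left zero_le θ'.2.2
  · rw [ContinuousAt, nhds_prod_eq, Cone.nhds_mk x hr, ← Filter.map_id (f := 𝓝 θ),
      Filter.prod_map_map_eq, tendsto_map'_iff, ← nhds_prod_eq]
    have : Continuous fun q : unitInterval × (X × ℝ≥0) =>
        Cone.mk X q.2.1 (unitInterval.toNNReal q.1 * q.2.2) :=
      Cone.continuous_mk.comp (Continuous.prodMk (by fun_prop)
        ((unitInterval.toNNReal_continuous.comp continuous_fst).mul (by fun_prop)))
    exact this.continuousAt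

lemma Cone.measurable_basePt [Nonempty X] [MeasurableSpace X] [BorelSpace X] :
    Measurable (Cone.basePt X) := by
  refine measurable_of_isOpen fun s hs => ?_
  have h1 : IsOpen ((fun p : X × ℝ≥0 => Cone.mk X p.1 p.2) '' (s ×ˢ {r | r ≠ 0})) :=
    Cone.isOpen_image_mk (hs.prod isOpen_ne) fun p hp => hp.2
  have h2 : MeasurableSet {y : Cone X | Cone.radius X y = 0} :=
    (isClosed_eq Cone.continuous_radius continuous_const).measurableSet
  have h3 : Cone.basePt X ⁻¹' s =
      (fun p : X × ℝ≥0 => Cone.mk X p.1 p.2) '' (s ×ˢ {r | r ≠ 0}) ∪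
        ({y | Cone.radius X y = 0} ∩ {_y | Classical.arbitrary X ∈ s}) := by
    ext y
    obtain ⟨x, r, rfl⟩ := Cone.mk_surjective y
    rcases eq_or_ne r 0 with rfl | hr
    · have : Cone.basePt X (Cone.mk X x 0) = Classical.arbitrary X := if_pos rfl
      simp only [mem_preimage, this, mem_union, mem_inter_iff, mem_ofPred_eq, Cone.radius_mk,
        true_and]
      refine ⟨Or.inr, ?_⟩
      rintro (⟨p, hp, hp'⟩ | h)
      · exact absurd (congrArg (Cone.radius X) hp') hp.2
      · exact h
    · simp only [mem_preimage, Cone.basePt_mk x hr, mem_union, mem_inter_iff, mem_ofPred_eq,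
        Cone.radius_mk, hr, false_and, or_false]
      refine ⟨fun hx => ⟨(x, r), ⟨hx, hr⟩, rfl⟩, ?_⟩
      rintro ⟨p, hp, hp'⟩
      rcases Cone.mk_eq_mk_iff.1 hp' with h | h
      · have hx : p.1 = x := congrArg Prod.fst h
        exact hx ▸ hp.1
      · exact absurd h.2 hr
  rw [h3]
  exact h1.measurableSet.union (h2.inter (MeasurableSet.const _))

end ConeTopology

/-! ### Parametric minimisation over a compact space -/

section Selection

lemma lowerSemicontinuous_biInf_of_isCompact {Z I : Type*} [TopologicalSpace Z]
    [TopologicalSpace I] [CompactSpace I] {G : Z × I → ℝ≥0∞} (hG : LowerSemicontinuous G)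
    {K : Set I} (hK : IsClosed K) (hne : K.Nonempty) :
    LowerSemicontinuous (fun z => ⨅ θ ∈ K, G (z, θ)) ∧
      ∀ z, ∃ θ ∈ K, G (z, θ) = ⨅ θ ∈ K, G (z, θ) := by
  have hmin : ∀ z, ∃ θ ∈ K, G (z, θ) = ⨅ θ ∈ K, G (z, θ) := by
    intro z
    have hz : LowerSemicontinuous fun θ => G (z, θ) :=
      hG.comp (Continuous.prodMk_right z)
    obtain ⟨θ, hθ, h⟩ := (hz.lowerSemicontinuousOn K).exists_isMinOn hne hK.isCompact
    exact ⟨θ, hθ, le_antisymm (le_iInf₂ fun θ' hθ' => h hθ') (iInf₂_le θ hθ)⟩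
  refine ⟨lowerSemicontinuous_iff_isClosed_preimage.2 fun c => ?_, hmin⟩
  convert isClosedMap_fst_of_compactSpace _
    ((hG.isClosed_preimage c).inter (hK.preimage (continuous_snd (X := Z)))) using 1
  ext z
  constructor
  · intro hz
    obtain ⟨θ, hθ, h⟩ := hmin z
    exact ⟨(z, θ), ⟨h.trans_le hz, hθ⟩, rfl⟩
  · rintro ⟨⟨z, θ⟩, ⟨h, hθ⟩, rfl⟩
    exact (iInf₂_le (f := fun θ _ => G (z, θ)) θ hθ).trans h

/-- Measurable selection of a parameter in a compact linear order satisfying a lower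
semicontinuous inequality. -/
lemma exists_measurable_selection {Y Z I : Type*} [MeasurableSpace Y] [TopologicalSpace Z]
    [MeasurableSpace Z] [OpensMeasurableSpace Z] [TopologicalSpace I] [CompactSpace I]
    [LinearOrder I] [OrderTopology I] [SecondCountableTopology I] [MeasurableSpace I]
    [BorelSpace I] {G : Z × I → ℝ≥0∞} (hG : LowerSemicontinuous G) {s : Y → Z}
    (hs : Measurable s) {f : Y → ℝ≥0∞} (hf : Measurable f) (hex : ∀ y, ∃ θ, G (s y, θ) ≤ f y) :
    ∃ θ : Y → I, Measurable θ ∧ ∀ y, G (s y, θ y) ≤ f y := by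
  have hleast : ∀ y, ∃ θ, IsLeast {θ | G (s y, θ) ≤ f y} θ := fun y =>
    (((hG.comp (Continuous.prodMk_right (s y))).isClosed_preimage (f y)).isCompact).exists_isLeast
      (hex y)
  choose θ hθ using hleast
  refine ⟨θ, measurable_of_Iic fun c => ?_, fun y => (hθ y).1⟩
  obtain ⟨hm, hmin⟩ := lowerSemicontinuous_biInf_of_isCompact hG (isClosed_Iic (a := c)) ⟨c, le_rfl⟩
  convert measurableSet_le (hm.measurable.comp hs) hf using 1
  ext y
  constructor
  · intro hy
    exact (iInf₂_le (f := fun θ' _ => G (s y, θ')) (θ y) hy).trans (hθ y).1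
  · intro hy
    obtain ⟨θ', hθ', h⟩ := hmin (s y)
    exact ((hθ y).2 (h.trans_le hy)).trans hθ'

end Selection

/-! ### Radial convexification as a minimal splitting cost -/

section Splitting

lemma toNNReal_add_toNNReal_symm (θ : unitInterval) :
    unitInterval.toNNReal θ + unitInterval.toNNReal (unitInterval.symm θ) = 1 := by
  ext
  simp

lemma exists_unitInterval_mul_add (a b : ℝ≥0) : ∃ θ : unitInterval,
    unitInterval.toNNReal θ * (a + b) = a ∧
      unitInterval.toNNReal (unitInterval.symm θ) * (a + b) = b := by
  have h1 : ∃ θ : unitInterval, unitInterval.toNNReal θ * (a + b) = a := by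
    rcases eq_or_ne (a + b) 0 with h | h
    · exact ⟨0, by rw [h, mul_zero, (add_eq_zero.1 h).1]⟩
    · have hle : a / (a + b) ≤ 1 := div_le_one_of_le₀ le_self_add zero_le
      refine ⟨⟨(a / (a + b) : ℝ≥0), NNReal.coe_nonneg _, by exact_mod_cast hle⟩, ?_⟩
      exact div_mul_cancel₀ a h
  obtain ⟨θ, hθ⟩ := h1
  refine ⟨θ, hθ, ?_⟩
  have h2 : unitInterval.toNNReal θ * (a + b) +
      unitInterval.toNNReal (unitInterval.symm θ) * (a + b) = a + b := by
    rw [← add_mul, toNNReal_add_toNNReal_symm, one_mul]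
  rw [hθ] at h2
  exact add_left_cancel h2

variable {X₁ X₂ : Type*} [TopologicalSpace X₁] [TopologicalSpace X₂]

/-- Independent rescaling of the two components of a point of the product cone. -/
def scaleProd (z : ((Cone X₁ × Cone X₂) × unitInterval) × unitInterval) : Cone X₁ × Cone X₂ :=
  (Cone.smul X₁ (unitInterval.toNNReal z.1.2) z.1.1.1,
    Cone.smul X₂ (unitInterval.toNNReal z.2) z.1.1.2)

/-- The fractions complementary to those of `z`. -/
def complFractions (z : ((Cone X₁ × Cone X₂) × unitInterval) × unitInterval) :
    ((Cone X₁ × Cone X₂) × unitInterval) × unitInterval :=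
  ((z.1.1, unitInterval.symm z.1.2), unitInterval.symm z.2)

lemma continuous_scaleProd : Continuous (scaleProd (X₁ := X₁) (X₂ := X₂)) :=
  Continuous.prodMk
    (Cone.continuous_smul.comp (Continuous.prodMk (continuous_snd.comp continuous_fst)
      (continuous_fst.comp (continuous_fst.comp continuous_fst))))
    (Cone.continuous_smul.comp (Continuous.prodMk continuous_snd
      (continuous_snd.comp (continuous_fst.comp continuous_fst))))

lemma continuous_complFractions : Continuous (complFractions (X₁ := X₁) (X₂ := X₂)) :=
  Continuous.prodMk (Continuous.prodMk (continuous_fst.comp continuous_fst)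
    (unitInterval.continuous_symm.comp (continuous_snd.comp continuous_fst)))
    (unitInterval.continuous_symm.comp continuous_snd)

/-- The cost of splitting a point of the product cone with prescribed fractions. -/
def splitFun (H : Cone X₁ × Cone X₂ → ℝ≥0∞)
    (z : ((Cone X₁ × Cone X₂) × unitInterval) × unitInterval) : ℝ≥0∞ :=
  H (scaleProd z) + H (scaleProd (complFractions z))

/-- The least cost of splitting a point of the product cone into two radial parts. -/
def splitCost (H : Cone X₁ × Cone X₂ → ℝ≥0∞) (y : Cone X₁ × Cone X₂) : ℝ≥0∞ :=
  ⨅ q ∈ (univ : Set (unitInterval × unitInterval)), splitFun H ((y, q.1), q.2)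

variable {H : Cone X₁ × Cone X₂ → ℝ≥0∞}

lemma lowerSemicontinuous_splitFun (hlsc : LowerSemicontinuous H) :
    LowerSemicontinuous (splitFun H) :=
  (hlsc.comp continuous_scaleProd).add
    (hlsc.comp (continuous_scaleProd.comp continuous_complFractions))

lemma lowerSemicontinuous_splitCost (hlsc : LowerSemicontinuous H) :
    LowerSemicontinuous (splitCost H) ∧
      ∀ y, ∃ θ₁ θ₂, splitFun H ((y, θ₁), θ₂) ≤ splitCost H y := by
  have hG : LowerSemicontinuous fun z : (Cone X₁ × Cone X₂) × (unitInterval × unitInterval) =>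
      splitFun H ((z.1, z.2.1), z.2.2) :=
    (lowerSemicontinuous_splitFun hlsc).comp (by fun_prop)
  obtain ⟨h1, h2⟩ := lowerSemicontinuous_biInf_of_isCompact hG isClosed_univ univ_nonempty
  refine ⟨h1, fun y => ?_⟩
  obtain ⟨q, -, hq⟩ := h2 y
  exact ⟨q.1, q.2, hq.le⟩

lemma isSplitting_secF (hlsc : LowerSemicontinuous H) (x₁ : X₁) (x₂ : X₂) :
    IsSplitting (secF H x₁ x₂) (secF (splitCost H) x₁ x₂) where
  le_add a b := by
    obtain ⟨θ₁, h1, h1'⟩ := exists_unitInterval_mul_add a.1 b.1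
    obtain ⟨θ₂, h2, h2'⟩ := exists_unitInterval_mul_add a.2 b.2
    refine (iInf₂_le (θ₁, θ₂) (mem_univ _)).trans_eq ?_
    simp [splitFun, scaleProd, complFractions, secF, h1, h1', h2, h2']
  exists_add_le r := by
    obtain ⟨θ₁, θ₂, h⟩ :=
      (lowerSemicontinuous_splitCost hlsc).2 (Cone.mk X₁ x₁ r.1, Cone.mk X₂ x₂ r.2)
    refine ⟨(unitInterval.toNNReal θ₁ * r.1, unitInterval.toNNReal θ₂ * r.2),
      (unitInterval.toNNReal (unitInterval.symm θ₁) * r.1,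
        unitInterval.toNNReal (unitInterval.symm θ₂) * r.2), ?_, h⟩
    refine Prod.ext ?_ ?_
    · exact (add_mul _ _ _).symm.trans (by rw [toNNReal_add_toNNReal_symm]; exact one_mul _)
    · exact (add_mul _ _ _).symm.trans (by rw [toNNReal_add_toNNReal_symm]; exact one_mul _)

lemma continuous_mk_mk (x₁ : X₁) (x₂ : X₂) :
    Continuous fun r : ℝ≥0 × ℝ≥0 => (Cone.mk X₁ x₁ r.1, Cone.mk X₂ x₂ r.2) :=
  (Cone.continuous_mk.comp (Continuous.prodMk continuous_const continuous_fst)).prodMk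
    (Cone.continuous_mk.comp (Continuous.prodMk continuous_const continuous_snd))

lemma apply_vertex (hproper : ProperCost H) (hhom : RadiallyHomogeneous H)
    (hlsc : LowerSemicontinuous H) (x₁ : X₁) (x₂ : X₂) :
    H (Cone.mk X₁ x₁ 0, Cone.mk X₂ x₂ 0) = 0 := by
  obtain ⟨⟨y₁, y₂⟩, hy⟩ := hproper
  obtain ⟨u₁, r₁, rfl⟩ := Cone.mk_surjective y₁
  obtain ⟨u₂, r₂, rfl⟩ := Cone.mk_surjective y₂
  rw [Cone.mk_zero_eq x₁ u₁, Cone.mk_zero_eq x₂ u₂]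
  have hcont : Continuous fun lam : ℝ≥0 =>
      (Cone.mk X₁ u₁ (lam * r₁), Cone.mk X₂ u₂ (lam * r₂)) :=
    (continuous_mk_mk u₁ u₂).comp (f := fun lam : ℝ≥0 => (lam * r₁, lam * r₂)) (by fun_prop)
  have h0 := (hlsc.comp hcont) 0
  by_contra hne
  obtain ⟨c, hc0, hc⟩ := exists_between (pos_iff_ne_zero.2 hne)
  have h1 := h0 c (by simpa using hc)
  have h2 : Tendsto (fun lam : ℝ≥0 => (lam : ℝ≥0∞) * H (Cone.mk X₁ u₁ r₁, Cone.mk X₂ u₂ r₂))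
      (𝓝[>] 0) (𝓝 0) := by
    have : Tendsto (fun lam : ℝ≥0 => (lam : ℝ≥0∞)) (𝓝[>] 0) (𝓝 0) :=
      (ENNReal.continuous_coe.tendsto' 0 0 rfl).mono_left nhdsWithin_le_nhds
    simpa using ENNReal.Tendsto.mul_const this (Or.inr hy)
  obtain ⟨lam, ⟨hl1, hl2⟩, hl3⟩ := (((h1.filter_mono nhdsWithin_le_nhds).and
    (h2.eventually_lt_const hc0)).and self_mem_nhdsWithin).exists
  have hl1' : c < H (Cone.mk X₁ u₁ (lam * r₁), Cone.mk X₂ u₂ (lam * r₂)) := hl1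
  rw [hhom _ _ _ _ _ hl3] at hl1'
  exact lt_asymm hl1' hl2

lemma secF_smul (hproper : ProperCost H) (hhom : RadiallyHomogeneous H)
    (hlsc : LowerSemicontinuous H) (x₁ : X₁) (x₂ : X₂) (c : ℝ≥0) (r : ℝ≥0 × ℝ≥0) :
    secF H x₁ x₂ (c • r) = c * secF H x₁ x₂ r := by
  rcases eq_or_ne c 0 with rfl | hc
  · simpa [secF] using apply_vertex hproper hhom hlsc x₁ x₂
  · exact hhom x₁ x₂ r.1 r.2 c (pos_iff_ne_zero.2 hc)

lemma radialConvexification_eq_splitCost [Nonempty X₁] [Nonempty X₂] (hproper : ProperCost H)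
    (hhom : RadiallyHomogeneous H) (hlsc : LowerSemicontinuous H) :
    radialConvexification H = splitCost H := by
  funext y
  rw [radialConvexification, (isSplitting_secF hlsc _ _).convexHullFn_eq
    (secF_smul hproper hhom hlsc _ _), secF, Cone.mk_basePt_radius, Cone.mk_basePt_radius]

lemma lscHull_eq_of_lowerSemicontinuous {E : Type*} [TopologicalSpace E] {F : E → ℝ≥0∞}
    (hF : LowerSemicontinuous F) : lscHull F = F :=
  le_antisymm (fun e => iSup₂_le fun _ hg => hg.2 e)
    fun _ => le_iSup₂_of_le F ⟨hF, le_rfl⟩ le_rfl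

lemma splitCost_le (hproper : ProperCost H) (hhom : RadiallyHomogeneous H)
    (hlsc : LowerSemicontinuous H) : splitCost H ≤ H := by
  rintro ⟨y₁, y₂⟩
  obtain ⟨x₁, r₁, rfl⟩ := Cone.mk_surjective y₁
  obtain ⟨x₂, r₂, rfl⟩ := Cone.mk_surjective y₂
  exact (isSplitting_secF hlsc x₁ x₂).le (secF_smul hproper hhom hlsc x₁ x₂) (r₁, r₂)

end Splitting

/-! ### Dual potentials -/

section Potentials

variable {X₁ X₂ : Type*} [TopologicalSpace X₁] [TopologicalSpace X₂]
  {H : Cone X₁ × Cone X₂ → ℝ≥0∞}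

/-- A linear minorant of one radial section remains, up to an error, a minorant of the
neighbouring sections. -/
lemma exists_nhds_linear_le (hhom : RadiallyHomogeneous H)
    (hlsc : LowerSemicontinuous H) {x₁ : X₁} {x₂ : X₂} {p q ε : ℝ} (hε : 0 < ε)
    (hle : ∀ s : ℝ≥0 × ℝ≥0, ENNReal.ofReal (p * s.1 + q * s.2) ≤ secF H x₁ x₂ s) :
    ∃ U₁ ∈ 𝓝 x₁, ∃ U₂ ∈ 𝓝 x₂, ∀ y₁ ∈ U₁, ∀ y₂ ∈ U₂, ∀ s : ℝ≥0 × ℝ≥0,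
      ENNReal.ofReal ((p - ε) * s.1 + (q - ε) * s.2) ≤ secF H y₁ y₂ s := by
  let ℓ : unitInterval → ℝ := fun θ => p * θ + q * (1 - θ) - ε
  have hℓ : Continuous ℓ := by fun_prop
  let Φ : (X₁ × X₂) × unitInterval → Cone X₁ × Cone X₂ := fun z =>
    (Cone.mk X₁ z.1.1 (unitInterval.toNNReal z.2),
      Cone.mk X₂ z.1.2 (unitInterval.toNNReal (unitInterval.symm z.2)))
  have hΦ : Continuous Φ :=
    (Cone.continuous_mk.comp (Continuous.prodMk (continuous_fst.comp continuous_fst)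
      (unitInterval.toNNReal_continuous.comp continuous_snd))).prodMk
    (Cone.continuous_mk.comp (Continuous.prodMk (continuous_snd.comp continuous_fst)
      (unitInterval.toNNReal_continuous.comp (unitInterval.continuous_symm.comp continuous_snd))))
  let C : Set ((X₁ × X₂) × unitInterval) :=
    {z | H (Φ z) ≤ ENNReal.ofReal (ℓ z.2)} ∩ {z | 0 ≤ ℓ z.2}
  have hC : IsClosed C := by
    refine IsClosed.inter ?_ (isClosed_le continuous_const (hℓ.comp continuous_snd))
    exact (hlsc.comp hΦ).isClosed_epigraph.preimage
      (f := fun z : (X₁ × X₂) × unitInterval => (z, ENNReal.ofReal (ℓ z.2)))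
      (Continuous.prodMk continuous_id
        (ENNReal.continuous_ofReal.comp (hℓ.comp continuous_snd)))
  have hx : (x₁, x₂) ∉ Prod.fst '' C := by
    rintro ⟨⟨⟨_, _⟩, θ⟩, ⟨h1, h2⟩, heq⟩
    obtain ⟨rfl, rfl⟩ := Prod.mk.inj heq
    have h3 := (hle (unitInterval.toNNReal θ, unitInterval.toNNReal (unitInterval.symm θ))).trans h1
    have h4 : 0 ≤ ℓ θ := h2
    rw [ENNReal.ofReal_le_ofReal_iff h4] at h3
    simp only [unitInterval.coe_toNNReal, unitInterval.coe_symm_eq, ℓ] at h3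
    linarith
  obtain ⟨U₁, hU₁, U₂, hU₂, hU⟩ := mem_nhds_prod_iff.1
    ((isClosedMap_fst_of_compactSpace _ hC).isOpen_compl.mem_nhds hx)
  refine ⟨U₁, hU₁, U₂, hU₂, fun y₁ hy₁ y₂ hy₂ s => ?_⟩
  have hI : ∀ θ, ENNReal.ofReal (ℓ θ) ≤ H (Φ ((y₁, y₂), θ)) := by
    intro θ
    by_contra! hlt
    refine hU (mk_mem_prod hy₁ hy₂) ⟨((y₁, y₂), θ), ⟨hlt.le, ?_⟩, rfl⟩
    exact (ENNReal.ofReal_pos.1 (pos_of_gt hlt)).le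
  obtain ⟨θ, h1, h2⟩ := exists_unitInterval_mul_add s.1 s.2
  rcases eq_or_ne (s.1 + s.2) 0 with h0 | h0
  · obtain ⟨h01, h02⟩ := add_eq_zero.1 h0
    simp [h01, h02]
  · have h3 := hhom y₁ y₂ (unitInterval.toNNReal θ) (unitInterval.toNNReal (unitInterval.symm θ))
      (s.1 + s.2) (pos_iff_ne_zero.2 h0)
    rw [mul_comm, h1, mul_comm, h2] at h3
    have h1' : (θ : ℝ) * (s.1 + s.2) = s.1 := by
      simpa using congrArg ((↑) : ℝ≥0 → ℝ) h1
    calc ENNReal.ofReal ((p - ε) * s.1 + (q - ε) * s.2)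
        = ENNReal.ofReal ((s.1 + s.2 : ℝ≥0) * ℓ θ) := by
          congr 1
          simp only [ℓ]
          push_cast
          linear_combination (q - p) * h1'
      _ = (s.1 + s.2 : ℝ≥0) * ENNReal.ofReal (ℓ θ) := by
          rw [ENNReal.ofReal_mul (NNReal.coe_nonneg _), ENNReal.ofReal_coe_nnreal]
      _ ≤ (s.1 + s.2 : ℝ≥0) * H (Φ ((y₁, y₂), θ)) := by gcongr; exact hI θ
      _ = _ := h3.symm

/-- Lower semicontinuity at the points whose first component is the vertex. -/
lemma exists_strip_le (hhom : RadiallyHomogeneous H) (hlsc : LowerSemicontinuous H)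
    {x₁ : X₁} {x₂ : X₂} {q ε : ℝ} (hε : 0 < ε)
    (hle : ENNReal.ofReal q ≤ H (Cone.mk X₁ x₁ 0, Cone.mk X₂ x₂ 1)) :
    ∃ δ : ℝ≥0, 0 < δ ∧ ∃ U₂ ∈ 𝓝 x₂, ∀ y₁, ∀ y₂ ∈ U₂, ∀ s₁ s₂ : ℝ≥0, s₁ < δ * s₂ →
      ENNReal.ofReal ((q - ε) * s₂) ≤ H (Cone.mk X₁ y₁ s₁, Cone.mk X₂ y₂ s₂) := by
  rcases lt_or_ge q ε with hq | hq
  · refine ⟨1, one_pos, univ, univ_mem, fun y₁ y₂ _ s₁ s₂ _ => ?_⟩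
    rw [ENNReal.ofReal_of_nonpos
      (mul_nonpos_of_nonpos_of_nonneg (by linarith) s₂.coe_nonneg)]
    exact zero_le
  · have hlt : ENNReal.ofReal (q - ε) < H (Cone.mk X₁ x₁ 0, Cone.mk X₂ x₂ 1) :=
      ((ENNReal.ofReal_lt_ofReal_iff (by linarith)).2 (by linarith)).trans_le hle
    obtain ⟨V₁, hV₁, V₂, hV₂, hV⟩ := mem_nhds_prod_iff.1 (hlsc _ _ hlt)
    obtain ⟨δ, hδ, hstrip⟩ := Cone.exists_strip hV₁
    have hcont : Continuous fun y₂ : X₂ => Cone.mk X₂ y₂ 1 :=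
      Cone.continuous_mk.comp (Continuous.prodMk continuous_id continuous_const)
    refine ⟨δ, hδ, _, hcont.continuousAt hV₂, fun y₁ y₂ hy₂ s₁ s₂ hs => ?_⟩
    have hs₂ : 0 < s₂ := by
      by_contra! h0
      rw [le_antisymm h0 zero_le, mul_zero] at hs
      exact not_lt_zero hs
    have h1 : ENNReal.ofReal (q - ε) ≤ H (Cone.mk X₁ y₁ (s₁ / s₂), Cone.mk X₂ y₂ 1) :=
      (hV (mk_mem_prod (hstrip y₁ _ ((div_lt_iff₀ hs₂).2 hs)) hy₂)).le
    have h2 := hhom y₁ y₂ (s₁ / s₂) 1 s₂ hs₂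
    rw [mul_div_cancel₀ _ hs₂.ne', mul_one] at h2
    rw [h2, mul_comm, ENNReal.ofReal_mul (NNReal.coe_nonneg _), ENNReal.ofReal_coe_nnreal]
    gcongr

end Potentials

section DualFormula

lemma exists_bump {X : Type*} [TopologicalSpace X] [CompletelyRegularSpace X] {x : X} {U : Set X}
    (hU : U ∈ 𝓝 x) {a M : ℝ} (haM : -M ≤ a) :
    ∃ φ : X →ᵇ ℝ, φ x = a ∧ (∀ y, φ y ≤ a) ∧ ∀ y ∉ U, φ y = -M := by
  obtain ⟨V, hVU, hV, hxV⟩ := mem_nhds_iff.1 hU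
  obtain ⟨f, hf, hfx, hfV⟩ := CompletelyRegularSpace.completely_regular_isOpen x V hV hxV
  have hb : ∀ y, ‖a - (a + M) * f y‖ ≤ |a| + |a + M| := by
    intro y
    refine (norm_sub_le _ _).trans (add_le_add le_rfl ?_)
    rw [norm_mul]
    refine mul_le_of_le_one_right (norm_nonneg _) ?_
    rw [Real.norm_of_nonneg (f y).2.1]
    exact (f y).2.2
  refine ⟨BoundedContinuousFunction.ofNormedAddCommGroup (fun y => a - (a + M) * f y)
    (by fun_prop) _ hb, ?_, fun y => ?_, fun y hy => ?_⟩
  · simp [hfx]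
  · have := mul_nonneg (by linarith : 0 ≤ a + M) (f y).2.1
    simpa using this
  · have h1 : f y = 1 := hfV fun h => hy (hVU h)
    simp [h1]

variable {X₁ X₂ : Type*} [TopologicalSpace X₁] [TopologicalSpace X₂]
  {H : Cone X₁ × Cone X₂ → ℝ≥0∞}

lemma exists_inPhi [CompletelyRegularSpace X₁] [CompletelyRegularSpace X₂]
    (hhom : RadiallyHomogeneous H) (hlsc : LowerSemicontinuous H) {x₁ : X₁} {x₂ : X₂}
    {p q ε : ℝ} (hε : 0 < ε)
    (hle : ∀ s : ℝ≥0 × ℝ≥0, ENNReal.ofReal (p * s.1 + q * s.2) ≤ secF H x₁ x₂ s) :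
    ∃ (φ₁ : X₁ →ᵇ ℝ) (φ₂ : X₂ →ᵇ ℝ), InPhi H φ₁ φ₂ ∧ φ₁ x₁ = p - ε ∧ φ₂ x₂ = q - ε := by
  obtain ⟨U₁, hU₁, U₂, hU₂, hU⟩ := exists_nhds_linear_le hhom hlsc hε hle
  obtain ⟨δ₂, hδ₂, V₂, hV₂, hV₂'⟩ := exists_strip_le (x₁ := x₁) (x₂ := x₂) (q := q) hhom hlsc hε
    (by simpa [secF] using hle (0, 1))
  have hhom' : RadiallyHomogeneous (X₁ := X₂) (X₂ := X₁) (H ∘ Prod.swap) :=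
    fun x₂ x₁ r₂ r₁ => hhom x₁ x₂ r₁ r₂
  obtain ⟨δ₁, hδ₁, V₁, hV₁, hV₁'⟩ := exists_strip_le (x₁ := x₂) (x₂ := x₁) (q := p) hhom'
    (hlsc.comp continuous_swap) hε (by simpa [secF] using hle (1, 0))
  have hδ₁' : (0 : ℝ) < δ₁ := hδ₁
  have hδ₂' : (0 : ℝ) < δ₂ := hδ₂
  obtain ⟨M, hM⟩ : ∃ M : ℝ, M = |p - ε| + |q - ε| + |p - ε| / δ₁ + |q - ε| / δ₂ := ⟨_, rfl⟩
  have hp1 := neg_abs_le (p - ε)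
  have hq1 := neg_abs_le (q - ε)
  have hp0 := abs_nonneg (p - ε)
  have hq0 := abs_nonneg (q - ε)
  have hpd : 0 ≤ |p - ε| / δ₁ := by positivity
  have hqd : 0 ≤ |q - ε| / δ₂ := by positivity
  have hM0 : 0 ≤ M := by linarith
  have hMp : p - ε ≤ M * δ₁ :=
    (le_abs_self _).trans ((div_le_iff₀ hδ₁').1 (by linarith))
  have hMq : q - ε ≤ M * δ₂ :=
    (le_abs_self _).trans ((div_le_iff₀ hδ₂').1 (by linarith))
  obtain ⟨φ₁, h1x, h1le, h1M⟩ := exists_bump (inter_mem hU₁ hV₁) (a := p - ε) (M := M) (by linarith)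
  obtain ⟨φ₂, h2x, h2le, h2M⟩ := exists_bump (inter_mem hU₂ hV₂) (a := q - ε) (M := M) (by linarith)
  refine ⟨φ₁, φ₂, fun y₁ y₂ s₁ s₂ => ?_, h1x, h2x⟩
  have hs₁ := s₁.coe_nonneg
  have hs₂ := s₂.coe_nonneg
  have e1 := mul_le_mul_of_nonneg_right (h1le y₁) hs₁
  have e2 := mul_le_mul_of_nonneg_right (h2le y₂) hs₂
  have hMs₁ := mul_nonneg hM0 hs₁
  have hMs₂ := mul_nonneg hM0 hs₂
  by_cases hy₁ : y₁ ∈ U₁ ∩ V₁ <;> by_cases hy₂ : y₂ ∈ U₂ ∩ V₂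
  · exact (ENNReal.ofReal_le_ofReal (by linarith)).trans (hU y₁ hy₁.1 y₂ hy₂.1 (s₁, s₂))
  · rw [h2M y₂ hy₂]
    rcases lt_or_ge s₂ (δ₁ * s₁) with hlt | hge
    · exact (ENNReal.ofReal_le_ofReal (by linarith)).trans (hV₁' y₂ y₁ hy₁.2 s₂ s₁ hlt)
    · have hge' : (δ₁ : ℝ) * s₁ ≤ s₂ := by exact_mod_cast hge
      have e3 := mul_le_mul_of_nonneg_left hge' hM0
      have e4 := mul_le_mul_of_nonneg_right hMp hs₁
      rw [ENNReal.ofReal_of_nonpos (by linarith)]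
      exact zero_le
  · rw [h1M y₁ hy₁]
    rcases lt_or_ge s₁ (δ₂ * s₂) with hlt | hge
    · exact (ENNReal.ofReal_le_ofReal (by linarith)).trans (hV₂' y₁ y₂ hy₂.2 s₁ s₂ hlt)
    · have hge' : (δ₂ : ℝ) * s₂ ≤ s₁ := by exact_mod_cast hge
      have e3 := mul_le_mul_of_nonneg_left hge' hM0
      have e4 := mul_le_mul_of_nonneg_right hMq hs₂
      rw [ENNReal.ofReal_of_nonpos (by linarith)]
      exact zero_le
  · rw [h1M y₁ hy₁, h2M y₂ hy₂, ENNReal.ofReal_of_nonpos (by linarith)]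
    exact zero_le

lemma splitCost_eq_iSup_inPhi [CompletelyRegularSpace X₁] [CompletelyRegularSpace X₂]
    (hproper : ProperCost H) (hhom : RadiallyHomogeneous H) (hlsc : LowerSemicontinuous H)
    (x₁ : X₁) (x₂ : X₂) (r₁ r₂ : ℝ≥0) :
    splitCost H (Cone.mk X₁ x₁ r₁, Cone.mk X₂ x₂ r₂) =
      ⨆ (φ₁ : X₁ →ᵇ ℝ) (φ₂ : X₂ →ᵇ ℝ) (_ : InPhi H φ₁ φ₂),
        ENNReal.ofReal (φ₁ x₁ * r₁ + φ₂ x₂ * r₂) := by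
  have hsplit := isSplitting_secF hlsc x₁ x₂
  have hom := secF_smul hproper hhom hlsc x₁ x₂
  refine le_antisymm (ENNReal.le_of_forall_nnreal_lt fun τ hτ => ?_) ?_
  · have hk : LowerSemicontinuous (secF (splitCost H) x₁ x₂) :=
      (lowerSemicontinuous_splitCost hlsc).1.comp (continuous_mk_mk x₁ x₂)
    obtain ⟨p, q, hpq, hlt⟩ := exists_linear_le (hsplit.subadditive hom) (hsplit.smul_le hom) hk
      (r₁, r₂) hτ
    obtain ⟨ε, hε, hle⟩ : ∃ ε : ℝ, 0 < ε ∧ ε * (r₁ + r₂) ≤ p * r₁ + q * r₂ - τ := by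
      refine ⟨(p * r₁ + q * r₂ - τ) / (r₁ + r₂ + 1),
        div_pos (sub_pos.2 hlt) (by positivity), ?_⟩
      rw [div_mul_eq_mul_div, div_le_iff₀ (by positivity)]
      exact mul_le_mul_of_nonneg_left (by linarith) (sub_pos.2 hlt).le
    obtain ⟨φ₁, φ₂, hφ, h1, h2⟩ := exists_inPhi hhom hlsc hε
      fun s => (hpq s).trans (hsplit.le hom s)
    refine le_iSup_of_le φ₁ (le_iSup_of_le φ₂ (le_iSup_of_le hφ ?_))
    rw [h1, h2, ← ENNReal.ofReal_coe_nnreal]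
    exact ENNReal.ofReal_le_ofReal (by linarith)
  · refine iSup_le fun φ₁ => iSup_le fun φ₂ => iSup_le fun hφ => ?_
    obtain ⟨a, b, hab, hle⟩ := hsplit.exists_add_le (r₁, r₂)
    obtain ⟨rfl, rfl⟩ := Prod.mk.inj hab
    refine le_trans ?_ hle
    refine le_trans (le_of_eq ?_) (ENNReal.ofReal_add_le.trans
      (add_le_add (hφ x₁ x₂ a.1 a.2) (hφ x₁ x₂ b.1 b.2)))
    congr 1
    push_cast
    ring

end DualFormula

/-! ### Transport costs of the relaxed cost -/

section Transport

lemma map_basePt_split {X Y : Type*} [TopologicalSpace X] [Nonempty X] [MeasurableSpace X]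
    [BorelSpace X] [MeasurableSpace Y] (α : Measure Y) {c : Y → Cone X} (hc : Measurable c)
    {S T : Y → Y} (hS : Measurable S) (hT : Measurable T) {θ : Y → unitInterval}
    (hcS : ∀ y, c (S y) = Cone.smul X (unitInterval.toNNReal (θ y)) (c y))
    (hcT : ∀ y, c (T y) =
      Cone.smul X (unitInterval.toNNReal (unitInterval.symm (θ y))) (c y)) :
    Measure.map (fun y => Cone.basePt X (c y)) ((α.map S + α.map T).withDensity
        fun y => (Cone.radius X (c y) : ℝ≥0∞) ^ (1 : ℝ)) =
      Measure.map (fun y => Cone.basePt X (c y)) (α.withDensity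
        fun y => (Cone.radius X (c y) : ℝ≥0∞) ^ (1 : ℝ)) := by
  have hb : Measurable fun y => Cone.basePt X (c y) := Cone.measurable_basePt.comp hc
  have hr : Measurable fun y => (Cone.radius X (c y) : ℝ≥0∞) :=
    measurable_coe_nnreal_ennreal.comp (Cone.continuous_radius.measurable.comp hc)
  simp only [ENNReal.rpow_one]
  ext s hs
  have hB : MeasurableSet ((fun y => Cone.basePt X (c y)) ⁻¹' s) := hb hs
  have hscale : ∀ (R : Y → Y) (η : Y → unitInterval),
      (∀ y, c (R y) = Cone.smul X (unitInterval.toNNReal (η y)) (c y)) → ∀ y,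
      ((fun y => Cone.basePt X (c y)) ⁻¹' s).indicator (fun y => (Cone.radius X (c y) : ℝ≥0∞))
        (R y) = (unitInterval.toNNReal (η y) : ℝ≥0∞) *
      ((fun y => Cone.basePt X (c y)) ⁻¹' s).indicator (fun y => (Cone.radius X (c y) : ℝ≥0∞))
        y := by
    classical
    intro R η hR y
    by_cases h0 : unitInterval.toNNReal (η y) * Cone.radius X (c y) = 0
    · have h1 : Cone.radius X (c (R y)) = 0 := by rw [hR, Cone.radius_smul, h0]
      have h2 : (unitInterval.toNNReal (η y) : ℝ≥0∞) * Cone.radius X (c y) = 0 := by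
        rw [← ENNReal.coe_mul, h0, ENNReal.coe_zero]
      simp only [indicator_apply, h1, mul_ite, h2, ENNReal.coe_zero, mul_zero, ite_self]
    · have h1 : Cone.basePt X (c (R y)) = Cone.basePt X (c y) := by
        rw [hR, Cone.basePt_smul h0]
      have h2 : (Cone.radius X (c (R y)) : ℝ≥0∞) =
          unitInterval.toNNReal (η y) * Cone.radius X (c y) := by
        rw [hR, Cone.radius_smul, ENNReal.coe_mul]
      simp only [indicator_apply, mem_preimage, h1, h2, mul_ite, mul_zero]
  have hmeas := hr.indicator hB
  have hmS : Measurable fun y => ((fun y => Cone.basePt X (c y)) ⁻¹' s).indicator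
      (fun y => (Cone.radius X (c y) : ℝ≥0∞)) (S y) := hmeas.comp hS
  rw [Measure.map_apply hb hs, Measure.map_apply hb hs, withDensity_apply _ hB,
    withDensity_apply _ hB, ← lintegral_indicator hB, ← lintegral_indicator hB,
    lintegral_add_measure, lintegral_map hmeas hS, lintegral_map hmeas hT,
    ← lintegral_add_left hmS]
  refine lintegral_congr fun y => ?_
  rw [hscale S θ hcS, hscale T (fun y => unitInterval.symm (θ y)) hcT, ← add_mul,
    ← ENNReal.coe_add, toNNReal_add_toNNReal_symm, ENNReal.coe_one, one_mul]

variable {X₁ X₂ : Type*} [TopologicalSpace X₁] [TopologicalSpace X₂]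
  {H : Cone X₁ × Cone X₂ → ℝ≥0∞}

lemma exists_measurable_fractions (hlsc : LowerSemicontinuous H) :
    ∃ s : Cone X₁ × Cone X₂ → ((Cone X₁ × Cone X₂) × unitInterval) × unitInterval,
      Measurable s ∧ (∀ y, (s y).1.1 = y) ∧ ∀ y, splitFun H (s y) ≤ splitCost H y := by
  obtain ⟨hK, hex⟩ := lowerSemicontinuous_splitCost hlsc
  have hG := lowerSemicontinuous_splitFun hlsc
  obtain ⟨hm, hmin⟩ := lowerSemicontinuous_biInf_of_isCompact hG isClosed_univ univ_nonempty
  obtain ⟨θ₁, hθ₁, h1⟩ := exists_measurable_selection hm measurable_id hK.measurable fun y => by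
    obtain ⟨θ₁, θ₂, h⟩ := hex y
    exact ⟨θ₁, (iInf₂_le θ₂ (mem_univ _)).trans h⟩
  obtain ⟨θ₂, hθ₂, h2⟩ := exists_measurable_selection hG (measurable_id.prodMk hθ₁)
    hK.measurable fun y => by
      obtain ⟨θ₂, -, h⟩ := hmin (y, θ₁ y)
      exact ⟨θ₂, h.trans_le (h1 y)⟩
  exact ⟨fun y => ((y, θ₁ y), θ₂ y), (measurable_id.prodMk hθ₁).prodMk hθ₂, fun _ => rfl, h2⟩

variable [MeasurableSpace X₁] [MeasurableSpace X₂]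

lemma UH_splitCost [Nonempty X₁] [Nonempty X₂] [BorelSpace X₁] [BorelSpace X₂]
    (hproper : ProperCost H)
    (hhom : RadiallyHomogeneous H) (hlsc : LowerSemicontinuous H)
    (μ₁ : Measure X₁) (μ₂ : Measure X₂) : UH H μ₁ μ₂ = UH (splitCost H) μ₁ μ₂ := by
  refine le_antisymm (le_iInf₂ fun α hα => ?_) (iInf₂_mono fun α _ =>
    lintegral_mono (splitCost_le hproper hhom hlsc))
  obtain ⟨s, hs, hsy, hle⟩ := exists_measurable_fractions hlsc
  obtain ⟨hfin, hmom, rfl, rfl⟩ := hα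
  have hS : Measurable fun y => scaleProd (s y) := continuous_scaleProd.measurable.comp hs
  have hT : Measurable fun y => scaleProd (complFractions (s y)) :=
    (continuous_scaleProd.comp continuous_complFractions).measurable.comp hs
  have hS₁ : ∀ y, (scaleProd (s y)).1 = Cone.smul X₁ (unitInterval.toNNReal (s y).1.2) y.1 :=
    fun y => by rw [scaleProd, hsy]
  have hS₂ : ∀ y, (scaleProd (s y)).2 = Cone.smul X₂ (unitInterval.toNNReal (s y).2) y.2 :=
    fun y => by rw [scaleProd, hsy]
  have hT₁ : ∀ y, (scaleProd (complFractions (s y))).1 =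
      Cone.smul X₁ (unitInterval.toNNReal (unitInterval.symm (s y).1.2)) y.1 :=
    fun y => by rw [scaleProd, complFractions, hsy]
  have hT₂ : ∀ y, (scaleProd (complFractions (s y))).2 =
      Cone.smul X₂ (unitInterval.toNNReal (unitInterval.symm (s y).2)) y.2 :=
    fun y => by rw [scaleProd, complFractions, hsy]
  have hadd : ∀ (θ : unitInterval) (r : ℝ≥0), ((unitInterval.toNNReal θ * r : ℝ≥0) : ℝ≥0∞) +
      ((unitInterval.toNNReal (unitInterval.symm θ) * r : ℝ≥0) : ℝ≥0∞) = r := by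
    intro θ r
    rw [← ENNReal.coe_add, ← add_mul, toNNReal_add_toNNReal_symm, one_mul]
  have hr : Measurable fun y : Cone X₁ × Cone X₂ =>
      (Cone.radius X₁ y.1 : ℝ≥0∞) + Cone.radius X₂ y.2 :=
    (ENNReal.continuous_coe.comp (Cone.continuous_radius.comp continuous_fst)).measurable.add
      (ENNReal.continuous_coe.comp (Cone.continuous_radius.comp continuous_snd)).measurable
  have hrS : Measurable fun y => (Cone.radius X₁ (scaleProd (s y)).1 : ℝ≥0∞) +
      Cone.radius X₂ (scaleProd (s y)).2 := hr.comp hS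
  have hHS : Measurable fun y => H (scaleProd (s y)) := hlsc.measurable.comp hS
  have hβ : IsHomCoupling 1 (α.map (fun y => scaleProd (s y)) +
      α.map (fun y => scaleProd (complFractions (s y))))
      (homMarginalFst 1 α) (homMarginalSnd 1 α) := by
    refine ⟨inferInstance, ?_, map_basePt_split α continuous_fst.measurable hS hT hS₁ hT₁,
      map_basePt_split α continuous_snd.measurable hS hT hS₂ hT₂⟩
    simp only [ENNReal.rpow_one] at hmom ⊢
    rw [lintegral_add_measure, lintegral_map hr hS, lintegral_map hr hT,
      ← lintegral_add_left hrS]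
    refine ne_of_eq_of_ne (lintegral_congr fun y => ?_) hmom
    rw [hS₁, hS₂, hT₁, hT₂]
    simp only [Cone.radius_smul]
    rw [add_add_add_comm, hadd, hadd]
  refine iInf₂_le_of_le _ hβ ?_
  rw [lintegral_add_measure, lintegral_map hlsc.measurable hS, lintegral_map hlsc.measurable hT,
    ← lintegral_add_left hHS]
  exact lintegral_mono hle

lemma lscConvexHull_singCost [OpensMeasurableSpace X₁] [OpensMeasurableSpace X₂]
    (hproper : ProperCost H) (hhom : RadiallyHomogeneous H) (hlsc : LowerSemicontinuous H) :
    lscConvexHull (singCost H) = lscConvexHull (singCost (splitCost H)) := by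
  refine le_antisymm (fun e => iSup₂_le ?_) fun e => iSup₂_le ?_
  · rintro g ⟨hg, hgc, hgF⟩
    refine le_iSup₂_of_le g ⟨hg, hgc, fun q => le_iInf₂ ?_⟩ le_rfl
    rintro ⟨y₁, y₂⟩ ⟨h1, h2⟩
    obtain ⟨x₁, r₁, rfl⟩ := Cone.mk_surjective y₁
    obtain ⟨x₂, r₂, rfl⟩ := Cone.mk_surjective y₂
    let D : ℝ≥0 × ℝ≥0 → FiniteMeasure X₁ × FiniteMeasure X₂ :=
      fun r => (r.1 • diracFM x₁, r.2 • diracFM x₂)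
    have hD : ∀ r, g (D r) ≤ secF H x₁ x₂ r := fun r =>
      (hgF _).trans (iInf₂_le (Cone.mk X₁ x₁ r.1, Cone.mk X₂ x₂ r.2) ⟨rfl, rfl⟩)
    have hq : q = D (r₁, r₂) := Prod.ext h1.symm h2.symm
    have hDsmul : ∀ (c : ℝ≥0) r, c • D r = D (c • r) := fun c r =>
      Prod.ext (smul_smul _ _ _) (smul_smul _ _ _)
    have hDadd : ∀ a b, D (a + b) = D a + D b := fun a b =>
      Prod.ext (add_smul _ _ _) (add_smul _ _ _)
    obtain ⟨a, b, hab, hle⟩ := (isSplitting_secF hlsc x₁ x₂).exists_add_le (r₁, r₂)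
    rw [hq, ← hab, hDadd]
    refine (hgc.apply_add_le _ _).trans (le_trans ?_ hle)
    rw [hDsmul, hDsmul]
    refine add_le_add ?_ ?_
    · grw [hD, secF_smul hproper hhom hlsc, inv_two_mul_two_mul]
    · grw [hD, secF_smul hproper hhom hlsc, inv_two_mul_two_mul]
  · rintro g ⟨hg, hgc, hgF⟩
    exact le_iSup₂_of_le g ⟨hg, hgc, hgF.trans fun q =>
      iInf₂_mono fun y _ => splitCost_le hproper hhom hlsc y⟩ le_rfl

end Transport

/-- The slice-by-slice lsc convex envelope `co* H` coincides with the
global envelope `cl co H` (radial convexification followed by lsc envelope on the cone), and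
both equal `sup {φ₁(x₁) r₁ + φ₂(x₂) r₂ : (φ₁,φ₂) ∈ Φ_H}`; moreover `U_H = U_{cl co H}` and
`cl co F_H = cl co F_{cl co H}`. -/
theorem convexification_identities
    [T2Space X₁] [T2Space X₂] [CompletelyRegularSpace X₁] [CompletelyRegularSpace X₂]
    [MeasurableSpace X₁] [BorelSpace X₁] [MeasurableSpace X₂] [BorelSpace X₂]
    [Nonempty X₁] [Nonempty X₂]
    (H : Cone X₁ × Cone X₂ → ℝ≥0∞) (hproper : ProperCost H)
    (hhom : RadiallyHomogeneous H) (hlsc : LowerSemicontinuous H) :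
    (∀ (x₁ : X₁) (x₂ : X₂) (r₁ r₂ : ℝ≥0),
      lscHull (radialConvexification H) (Cone.mk X₁ x₁ r₁, Cone.mk X₂ x₂ r₂) =
        lscConvexHull (secF H x₁ x₂) (r₁, r₂) ∧
      lscHull (radialConvexification H) (Cone.mk X₁ x₁ r₁, Cone.mk X₂ x₂ r₂) =
        ⨆ (φ₁ : X₁ →ᵇ ℝ) (φ₂ : X₂ →ᵇ ℝ) (_ : InPhi H φ₁ φ₂),
          ENNReal.ofReal (φ₁ x₁ * r₁ + φ₂ x₂ * r₂)) ∧
    (∀ (μ₁ : FiniteMeasure X₁) (μ₂ : FiniteMeasure X₂),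
      UH H (μ₁ : Measure X₁) (μ₂ : Measure X₂) =
        UH (lscHull (radialConvexification H)) (μ₁ : Measure X₁) (μ₂ : Measure X₂)) ∧
    lscConvexHull (singCost H) =
      lscConvexHull (singCost (lscHull (radialConvexification H))) := by
  obtain ⟨hK, -⟩ := lowerSemicontinuous_splitCost hlsc
  rw [radialConvexification_eq_splitCost hproper hhom hlsc, lscHull_eq_of_lowerSemicontinuous hK]
  refine ⟨fun x₁ x₂ r₁ r₂ => ⟨?_, splitCost_eq_iSup_inPhi hproper hhom hlsc x₁ x₂ r₁ r₂⟩,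
    fun μ₁ μ₂ => UH_splitCost hproper hhom hlsc _ _, lscConvexHull_singCost hproper hhom hlsc⟩
  rw [(isSplitting_secF hlsc x₁ x₂).lscConvexHull_eq (secF_smul hproper hhom hlsc x₁ x₂)
    (hK.comp (continuous_mk_mk x₁ x₂))]
  rfl

end UOT
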